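/- Let c, r ≥ 1 and n ≥ r. Then, as polynomials in x_1,…,x_n: s^{[n]}_{c^r} · s^{[2,n]}_{c^{r−1}} = s^{[n]}_{c^{r−1}} · s^{[2,n]}_{c^r} + x_1 · s^{[n]}_{(c−1)^r} · s^{[2,n]}_{(c+1)^{r−1}}. -/

import Mathlib

/-- A semistandard Young tableau of shape `(lam 0, lam 1, …, lam (k-1))` (so `lam i` is the
length of the `(i+1)`-st row), with entries in `{a, a+1, …, b}`: rows weakly increase,
columns strictly increase.  Entries outside the shape are `0`. -/
structure SSYT (k : ℕ) (lam : ℕ → ℤ) (a b : ℕ) where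
  entry : ℕ → ℕ → ℕ
  zero_outside : ∀ i j : ℕ, ¬(i < k ∧ (j : ℤ) < lam i) → entry i j = 0
  lower : ∀ i j : ℕ, i < k → (j : ℤ) < lam i → a ≤ entry i j
  upper : ∀ i j : ℕ, i < k → (j : ℤ) < lam i → entry i j ≤ b
  row_weak : ∀ i j₁ j₂ : ℕ, i < k → j₁ ≤ j₂ → (j₂ : ℤ) < lam i → entry i j₁ ≤ entry i j₂
  col_strict : ∀ i₁ i₂ j : ℕ, i₁ < i₂ → i₂ < k → (j : ℤ) < lam i₂ → entry i₁ j < entry i₂ j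

/-- The monomial `Π_i x_i^{m(i,T)}` of a tableau: the product of `x_{T(c)}` over the
cells `c` of the shape. -/
noncomputable def SSYT.weight {k : ℕ} {lam : ℕ → ℤ} {a b : ℕ} (T : SSYT k lam a b) :
    MvPolynomial ℕ ℤ :=
  ∏ i ∈ Finset.range k, ∏ j ∈ Finset.range (lam i).toNat, MvPolynomial.X (T.entry i j)

/-- `(lam 0, …, lam (k-1))` is a partition: weakly decreasing with nonnegative entries. -/
def IsPartitionSeq (k : ℕ) (lam : ℕ → ℤ) : Prop :=
  (∀ i, i + 1 < k → lam (i + 1) ≤ lam i) ∧ (∀ i, i < k → 0 ≤ lam i)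

/-- The Schur polynomial `s^{[a,b]}_lam = Σ_T Π_i x_i^{m(i,T)}`, the sum running over all
semistandard Young tableaux of shape `lam` with entries in `{a,…,b}`; by convention it is
`0` if `lam` is not a partition. -/
noncomputable def schur (k : ℕ) (lam : ℕ → ℤ) (a b : ℕ) : MvPolynomial ℕ ℤ :=
  letI := Classical.dec (IsPartitionSeq k lam)
  if IsPartitionSeq k lam then ∑ᶠ T : SSYT k lam a b, T.weight else 0

/-!
By the Jacobi–Trudi formula all six Schur polynomials are minors of a single matrix. Write `H` and
`h` for the complete homogeneous polynomials in `x_a, …, x_b` and in `x_{a+1}, …, x_b`, so that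
`H_m = h_m + x_a H_{m-1}`. Border the matrix `(H_{λ_i - 1 - i + j})` on top by the row
`1, x_a, x_a², …`. In a minor containing that row, subtracting `x_a` times the previous column
clears the row and turns every `H` into `h`, so the identity is the Desnanot–Jacobi identity for the
bordered matrix.

The Jacobi–Trudi formula holds because both of its sides satisfy the same branching rule in the last
variable. Removing the largest entries of a tableau leaves a shape interlacing with `λ`. Iterating
the recurrence in row `i` of the determinant writes that row as a sum over the part of the
interlacing shape between `λ_{i+1}` and `λ_i`, plus a multiple of row `i + 1`.
-/

section Determinants

variable {R : Type*} [CommRing R]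

theorem det_mul_det_adjugate_toBlocks₁₁ {p m : Type*} [Fintype p] [DecidableEq p] [Fintype m]
    [DecidableEq m] (M : Matrix (p ⊕ m) (p ⊕ m) R) :
    M.det * M.adjugate.toBlocks₁₁.det = M.det ^ Fintype.card p * M.toBlocks₂₂.det := by
  have mul_eq_blockTriangular :
      M * Matrix.fromBlocks M.adjugate.toBlocks₁₁ 0 M.adjugate.toBlocks₂₁ 1 =
        Matrix.fromBlocks (M.det • 1) M.toBlocks₁₂ 0 M.toBlocks₂₂ := by
    have mul_adjugate := M.mul_adjugate
    generalize M.adjugate = A, M.det = d at mul_adjugate ⊢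
    rw [← M.fromBlocks_toBlocks, ← A.fromBlocks_toBlocks, Matrix.fromBlocks_multiply,
      ← Matrix.fromBlocks_one, Matrix.fromBlocks_smul, Matrix.fromBlocks_inj] at mul_adjugate
    obtain ⟨block₁₁, -, block₂₁, -⟩ := mul_adjugate
    conv_lhs => rw [← M.fromBlocks_toBlocks]
    simp [Matrix.fromBlocks_multiply, block₁₁, block₂₁]
  simpa using congrArg Matrix.det mul_eq_blockTriangular

/-- Jacobi's theorem on complementary minors. -/
theorem det_adjugate_toBlocks₁₁ {p m : Type*} [Fintype p] [DecidableEq p] [Nonempty p] [Fintype m]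
    [DecidableEq m] (M : Matrix (p ⊕ m) (p ⊕ m) R) :
    M.adjugate.toBlocks₁₁.det = M.det ^ (Fintype.card p - 1) * M.toBlocks₂₂.det := by
  let generic := Matrix.mvPolynomialX (p ⊕ m) (p ⊕ m) ℤ
  let eval : MvPolynomial ((p ⊕ m) × (p ⊕ m)) ℤ →ₐ[ℤ] R :=
    MvPolynomial.aeval fun ij => M ij.1 ij.2
  have eval_generic : eval.mapMatrix generic = M := Matrix.mvPolynomialX_mapMatrix_aeval ℤ M
  suffices generic_identity : generic.adjugate.toBlocks₁₁.det =
      generic.det ^ (Fintype.card p - 1) * generic.toBlocks₂₂.det by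
    have eval_adjugate : eval.mapMatrix generic.adjugate.toBlocks₁₁ = M.adjugate.toBlocks₁₁ := by
      rw [← eval_generic, ← AlgHom.map_adjugate]; rfl
    have eval_toBlocks₂₂ : eval.mapMatrix generic.toBlocks₂₂ = M.toBlocks₂₂ := by
      rw [← eval_generic]; rfl
    simpa only [map_mul, map_pow, AlgHom.map_det, eval_adjugate, eval_toBlocks₂₂, eval_generic]
      using congrArg eval generic_identity
  apply mul_left_cancel₀ (Matrix.det_mvPolynomialX_ne_zero (p ⊕ m) ℤ)
  rw [det_mul_det_adjugate_toBlocks₁₁, ← mul_assoc, mul_pow_sub_one Fintype.card_ne_zero]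

/-- The reindexing of `Fin (s + 2)` that lists the two ends first and then the interior. -/
noncomputable def endsInteriorEquiv (s : ℕ) : Fin 2 ⊕ Fin s ≃ Fin (s + 2) :=
  Equiv.ofBijective (Sum.elim ![0, Fin.last (s + 1)] fun i => i.succ.castSucc) <| by
    rw [Fintype.bijective_iff_injective_and_card]
    refine ⟨Function.Injective.sumElim ?_ ?_ ?_, by simp [add_comm]⟩
    · intro i j; fin_cases i <;> fin_cases j <;> simp [Fin.ext_iff]
    · exact (Fin.castSucc_injective _).comp (Fin.succ_injective _)
    · intro i j; fin_cases i <;> simp [j.2.ne', Fin.ext_iff]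

/-- The Desnanot–Jacobi identity. -/
theorem det_mul_det_interior (s : ℕ) (M : Matrix (Fin (s + 2)) (Fin (s + 2)) R) :
    M.det * (M.submatrix (fun i : Fin s => i.succ.castSucc) fun i => i.succ.castSucc).det =
      (M.submatrix Fin.succ Fin.succ).det * (M.submatrix Fin.castSucc Fin.castSucc).det -
        (M.submatrix Fin.succ Fin.castSucc).det * (M.submatrix Fin.castSucc Fin.succ).det := by
  let e := endsInteriorEquiv s
  have e_zero : e (.inl 0) = 0 := rfl
  have e_one : e (.inl 1) = Fin.last (s + 1) := rfl
  have sign_sq : ((-1 : R) ^ (s + 1)) * (-1) ^ (s + 1) = 1 := by rw [← mul_pow]; simp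
  calc
    _ = (M.submatrix e e).det * (M.submatrix e e).toBlocks₂₂.det := by
      rw [Matrix.det_submatrix_equiv_self]; rfl
    _ = (M.submatrix e e).adjugate.toBlocks₁₁.det := by
      rw [det_adjugate_toBlocks₁₁, Fintype.card_fin, pow_one]
    _ = M.adjugate 0 0 * M.adjugate (Fin.last _) (Fin.last _) -
          M.adjugate 0 (Fin.last _) * M.adjugate (Fin.last _) 0 := by
      rw [Matrix.adjugate_submatrix_equiv_self, Matrix.det_fin_two]
      simp only [Matrix.toBlocks₁₁, Matrix.of_apply, Matrix.submatrix_apply, e_zero, e_one]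
    _ = _ := by
      simp only [Matrix.adjugate_fin_succ_eq_det_submatrix, Fin.succAbove_zero,
        Fin.succAbove_last, Fin.val_zero, Fin.val_last, add_zero, zero_add, pow_zero, one_mul,
        pow_add _ (s + 1) (s + 1), sign_sq]
      linear_combination (-(M.submatrix Fin.succ Fin.castSucc).det *
        (M.submatrix Fin.castSucc Fin.succ).det) * sign_sq

theorem det_eq_of_forall_row_eq_smul_add_succ {n : ℕ} {A B : Matrix (Fin (n + 1)) (Fin (n + 1)) R}
    (c : Fin n → R) (A_last : ∀ j, A (Fin.last n) j = B (Fin.last n) j)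
    (A_castSucc : ∀ (i : Fin n) (j), A i.castSucc j = B i.castSucc j + c i * A i.succ j) :
    A.det = B.det := by
  rw [← Matrix.det_submatrix_equiv_self Fin.revPerm A,
    ← Matrix.det_submatrix_equiv_self Fin.revPerm B]
  apply Matrix.det_eq_of_forall_row_eq_smul_add_pred fun i => c i.rev
  · simp [A_last]
  · simp [Fin.rev_succ, Fin.rev_castSucc, A_castSucc]

theorem det_of_sum_smul {n ι : Type*} [Fintype n] [DecidableEq n]
    (s : n → Finset ι) (c : n → ι → R) (v : n → ι → n → R) :
    (Matrix.of fun i => ∑ m ∈ s i, c i m • v i m).det =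
      ∑ f ∈ Fintype.piFinset s, (∏ i, c i (f i)) * (Matrix.of fun i => v i (f i)).det := by
  let D := (Matrix.detRowAlternating (n := n) (R := R)).toMultilinearMap
  calc
    _ = ∑ f ∈ Fintype.piFinset s, D fun i => c i (f i) • v i (f i) :=
      D.map_sum_finset (fun i m => c i m • v i m) s
    _ = _ := Finset.sum_congr rfl fun f _ => D.map_smul_univ (fun i => c i (f i)) _

end Determinants

section JacobiTrudi

variable {R : Type*} [CommRing R]

/-- The Jacobi–Trudi matrix `(h (λ_i - i + j))` of the sequence `lam`, for an arbitrary family `h`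
in the role of the complete homogeneous polynomials. -/
def jacobiTrudi (h : ℤ → R) (k : ℕ) (lam : ℕ → ℤ) : Matrix (Fin k) (Fin k) R :=
  Matrix.of fun i j => h (lam i - (i : ℕ) + (j : ℕ))

/-- The Jacobi–Trudi matrix of `lam - 1` with one more column, bordered on top by the geometric
progression `y, y x, y x², …`. -/
def borderedJacobiTrudi (h : ℤ → R) (x y : R) (k : ℕ) (lam : ℕ → ℤ) :
    Matrix (Fin (k + 1)) (Fin (k + 1)) R :=
  Matrix.of <| Matrix.vecCons (fun j => y * x ^ (j : ℕ))
    fun i j => h (lam i - 1 - (i : ℕ) + (j : ℕ))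

variable {H h : ℤ → R} {x : R}

theorem det_borderedJacobiTrudi (hH : ∀ m, H m = h m + x * H (m - 1)) (y : R) (k : ℕ)
    (lam : ℕ → ℤ) :
    (borderedJacobiTrudi H x y k lam).det = y * (jacobiTrudi h k lam).det := by
  let M := borderedJacobiTrudi H x y k lam
  -- Subtracting `x` times the previous column clears the top row and turns `H` into `h`.
  let B : Matrix (Fin (k + 1)) (Fin (k + 1)) R :=
    Matrix.of <| Matrix.vecCons (Matrix.vecCons y 0)
      fun i => Matrix.vecCons (M i.succ 0) (jacobiTrudi h k lam i)
  have det_eq : M.det = B.det := by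
    apply Matrix.det_eq_of_forall_col_eq_smul_add_pred fun _ => x
    · intro i
      cases i using Fin.cases <;> simp [M, B, borderedJacobiTrudi]
    · intro i j
      cases i using Fin.cases with
      | zero => simp [M, B, borderedJacobiTrudi, pow_succ', mul_left_comm]
      | succ i =>
        simp only [M, B, borderedJacobiTrudi, jacobiTrudi, Matrix.of_apply, Matrix.cons_val_succ,
          Fin.val_succ, Fin.val_castSucc]
        rw [hH]
        push_cast
        ring_nf
  have minor : B.submatrix Fin.succ Fin.succ = jacobiTrudi h k lam := rfl
  calc
    M.det = B 0 0 * (B.submatrix Fin.succ Fin.succ).det := by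
      rw [det_eq, Matrix.det_succ_row_zero, Fin.sum_univ_succ,
        Finset.sum_eq_zero fun j _ => by simp [B]]
      simp
    _ = y * (jacobiTrudi h k lam).det := by rw [minor]; rfl

theorem det_jacobiTrudi_mul_det_jacobiTrudi (hH : ∀ m, H m = h m + x * H (m - 1)) (r : ℕ)
    (lam : ℕ → ℤ) :
    (jacobiTrudi H (r + 1) lam).det * (jacobiTrudi h r lam).det =
      (jacobiTrudi H r lam).det * (jacobiTrudi h (r + 1) lam).det +
        x * (jacobiTrudi H (r + 1) fun i => lam i - 1).det *
          (jacobiTrudi h r fun i => lam i + 1).det := by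
  let M := borderedJacobiTrudi H x 1 (r + 1) lam
  have interior : M.submatrix (fun i : Fin r => i.succ.castSucc) (fun i => i.succ.castSucc) =
      jacobiTrudi H r lam := by
    ext i j
    refine congrArg H ?_
    simp only [Fin.castSucc_succ, Fin.val_succ, Fin.val_castSucc]
    push_cast
    ring
  have succ_succ : M.submatrix Fin.succ Fin.succ = jacobiTrudi H (r + 1) lam := by
    ext i j
    exact congrArg H (by simp only [Fin.val_succ]; push_cast; ring)
  have succ_castSucc : M.submatrix Fin.succ Fin.castSucc =
      jacobiTrudi H (r + 1) fun i => lam i - 1 := rfl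
  have castSucc_castSucc : M.submatrix Fin.castSucc Fin.castSucc =
      borderedJacobiTrudi H x 1 r lam := by
    ext i j
    cases i using Fin.cases <;> rfl
  have castSucc_succ : M.submatrix Fin.castSucc Fin.succ =
      borderedJacobiTrudi H x x r fun i => lam i + 1 := by
    ext i j
    cases i using Fin.cases with
    | zero => exact (one_mul _).trans (pow_succ' x j)
    | succ i => exact congrArg H (by simp only [Fin.val_succ]; push_cast; ring)
  have desnanot_jacobi := det_mul_det_interior r M
  rw [interior, succ_succ, succ_castSucc, castSucc_castSucc, castSucc_succ] at desnanot_jacobi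
  simp only [M, det_borderedJacobiTrudi hH] at desnanot_jacobi
  linear_combination -desnanot_jacobi

theorem eq_sum_Icc_add_of_recurrence (hH : ∀ m, H m = h m + x * H (m - 1)) {l n : ℤ}
    (hln : l ≤ n) :
    H n = ∑ m ∈ Finset.Icc l n, x ^ (n - m).toNat * h m + x ^ (n - l + 1).toNat * H (l - 1) := by
  induction n, hln using Int.leInduction with
  | base => simpa using hH l
  | succ n hln ih =>
    have pow_step {d : ℤ} (hd : 0 ≤ d) : x ^ (d + 1).toNat = x * x ^ d.toNat := by
      rw [Int.toNat_add hd zero_le_one, Int.toNat_one, pow_succ']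
    have sum_step : ∑ m ∈ Finset.Icc l n, x ^ (n + 1 - m).toNat * h m =
        x * ∑ m ∈ Finset.Icc l n, x ^ (n - m).toNat * h m := by
      rw [Finset.mul_sum]
      refine Finset.sum_congr rfl fun m hm => ?_
      rw [← mul_assoc, ← pow_step (sub_nonneg.2 (Finset.mem_Icc.1 hm).2), sub_add_eq_add_sub]
    calc
      H (n + 1) = h (n + 1) + x * H n := by rw [hH, add_sub_cancel_right]
      _ = h (n + 1) + ∑ m ∈ Finset.Icc l n, x ^ (n + 1 - m).toNat * h m +
          x ^ (n - l + 1 + 1).toNat * H (l - 1) := by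
        rw [ih, sum_step, pow_step (d := n - l + 1) (by omega)]
        ring
      _ = _ := by
        rw [← Finset.insert_Icc_right_eq_Icc_add_one (by omega), Finset.sum_insert (by simp),
          sub_add_eq_add_sub n l 1]
        simp

/-- The part of `lam = (lam 0, …, lam (k - 1))` after the `i`-th one, read as `0` past the end. -/
def nextPart (k : ℕ) (lam : ℕ → ℤ) (i : ℕ) : ℤ := if i + 1 < k then lam (i + 1) else 0

/-- The sequences `mu` with `lam 0 ≥ mu 0 ≥ lam 1 ≥ mu 1 ≥ ⋯ ≥ lam (k - 1) ≥ mu (k - 1) ≥ 0`: the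
shapes left after removing a horizontal strip from `lam`. -/
noncomputable def interlacing (k : ℕ) (lam : ℕ → ℤ) : Finset (Fin k → ℤ) :=
  Fintype.piFinset fun i => Finset.Icc (nextPart k lam i) (lam i)

/-- The extension by zero of a finite sequence, in the form in which `schur` takes its shapes. -/
noncomputable def zeroExtend {k : ℕ} (mu : Fin k → ℤ) : ℕ → ℤ := Function.extend Fin.val mu 0

@[simp]
theorem zeroExtend_val {k : ℕ} (mu : Fin k → ℤ) (i : Fin k) : zeroExtend mu i = mu i :=
  Fin.val_injective.extend_apply mu 0 i

theorem mem_interlacing {k : ℕ} {lam : ℕ → ℤ} {mu : Fin k → ℤ} :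
    mu ∈ interlacing k lam ↔ ∀ i : Fin k, nextPart k lam i ≤ mu i ∧ mu i ≤ lam i := by
  simp [interlacing]

theorem IsPartitionSeq.nextPart_le {k : ℕ} {lam : ℕ → ℤ} (hlam : IsPartitionSeq k lam) {i : ℕ}
    (hi : i < k) : nextPart k lam i ≤ lam i := by
  unfold nextPart
  split_ifs with hi'
  · exact hlam.1 i hi'
  · exact hlam.2 i hi

theorem det_jacobiTrudi_eq_det_sum (hH : ∀ m, H m = h m + x * H (m - 1))
    (H_neg : ∀ m < 0, H m = 0) {k : ℕ} {lam : ℕ → ℤ} (hlam : IsPartitionSeq k lam) :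
    (jacobiTrudi H k lam).det =
      (Matrix.of fun i : Fin k => ∑ m ∈ Finset.Icc (nextPart k lam i) (lam i),
        x ^ (lam i - m).toNat • fun j : Fin k => h (m - (i : ℕ) + (j : ℕ))).det := by
  have row_eq (i j : Fin k) : H (lam i - (i : ℕ) + (j : ℕ)) =
      ∑ m ∈ Finset.Icc (nextPart k lam i) (lam i),
        x ^ (lam i - m).toNat * h (m - (i : ℕ) + (j : ℕ)) +
      x ^ (lam i - nextPart k lam i + 1).toNat * H (nextPart k lam i - 1 - (i : ℕ) + (j : ℕ)) :=
    eq_sum_Icc_add_of_recurrence (H := fun m => H (m - (i : ℕ) + (j : ℕ)))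
      (h := fun m => h (m - (i : ℕ) + (j : ℕ)))
      (fun m => by rw [hH]; ring_nf) (hlam.nextPart_le i.2)
  cases k with
  | zero => simp
  | succ k =>
    -- The remainder in row `i` is a multiple of row `i + 1`; in the last row it vanishes.
    apply det_eq_of_forall_row_eq_smul_add_succ
      fun i => x ^ (lam i - nextPart (k + 1) lam i + 1).toNat
    · intro j
      have remainder_eq_zero : H (nextPart (k + 1) lam k - 1 - k + (j : ℕ)) = 0 :=
        H_neg _ (by rw [nextPart, if_neg (lt_irrefl _)]; omega)
      simpa [jacobiTrudi, remainder_eq_zero] using row_eq (Fin.last k) j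
    · intro i j
      have remainder_eq : nextPart (k + 1) lam i - 1 - (i : ℕ) = lam (i + 1) - (i + 1 : ℕ) := by
        rw [nextPart, if_pos (Nat.succ_lt_succ i.2)]
        push_cast
        ring
      simpa [jacobiTrudi, remainder_eq] using row_eq i.castSucc j

theorem det_jacobiTrudi_branching (hH : ∀ m, H m = h m + x * H (m - 1))
    (H_neg : ∀ m < 0, H m = 0) {k : ℕ} {lam : ℕ → ℤ} (hlam : IsPartitionSeq k lam) :
    (jacobiTrudi H k lam).det = ∑ mu ∈ interlacing k lam,
      (∏ i : Fin k, x ^ (lam i - mu i).toNat) * (jacobiTrudi h k (zeroExtend mu)).det := by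
  rw [det_jacobiTrudi_eq_det_sum hH H_neg hlam, det_of_sum_smul]
  simp only [jacobiTrudi, zeroExtend_val]
  rfl

end JacobiTrudi

section CompleteHomogeneous

variable {ι R : Type*} [CommRing R]

/-- The complete homogeneous symmetric polynomial of degree `m` in the `x i`, `i ∈ s`: the
coefficient of `t ^ m` in `∏ i ∈ s, 1 / (1 - x i * t)`, with value `0` in negative degrees. -/
noncomputable def completeHomogeneous (x : ι → R) (s : Finset ι) (m : ℤ) : R :=
  if m < 0 then 0 else (∏ i ∈ s, PowerSeries.mk (x i ^ ·)).coeff m.toNat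

theorem completeHomogeneous_of_neg (x : ι → R) (s : Finset ι) {m : ℤ} (hm : m < 0) :
    completeHomogeneous x s m = 0 :=
  if_pos hm

theorem completeHomogeneous_empty (x : ι → R) (m : ℤ) :
    completeHomogeneous x ∅ m = if m = 0 then 1 else 0 := by
  simp only [completeHomogeneous, Finset.prod_empty, PowerSeries.coeff_one]
  split_ifs <;> first | rfl | omega

theorem completeHomogeneous_insert [DecidableEq ι] (x : ι → R) {s : Finset ι} {i : ι} (hi : i ∉ s)
    (m : ℤ) :
    completeHomogeneous x (insert i s) m =
      completeHomogeneous x s m + x i * completeHomogeneous x (insert i s) (m - 1) := by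
  let P := ∏ j ∈ insert i s, PowerSeries.mk (x j ^ ·)
  let Q := ∏ j ∈ s, PowerSeries.mk (x j ^ ·)
  have geometric : PowerSeries.mk (x i ^ ·) =
      1 + PowerSeries.X * (PowerSeries.C (x i) * PowerSeries.mk (x i ^ ·)) := by
    ext (_ | n) <;> simp [PowerSeries.coeff_succ_X_mul, PowerSeries.coeff_one, pow_succ']
  have P_eq : P = Q + PowerSeries.X * (PowerSeries.C (x i) * P) := by
    have P_eq_mul : P = PowerSeries.mk (x i ^ ·) * Q := Finset.prod_insert hi
    linear_combination P_eq_mul + Q * geometric -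
      PowerSeries.X * PowerSeries.C (x i) * P_eq_mul
  simp only [completeHomogeneous]
  obtain hm | rfl | hm := lt_trichotomy m 0
  · simp [hm, hm.trans zero_lt_one]
  · simp
  · obtain ⟨n, rfl⟩ : ∃ n : ℕ, m = n + 1 := ⟨(m - 1).toNat, by omega⟩
    have nonneg : ¬ (n : ℤ) < 0 := by omega
    have succ_nonneg : ¬ (n : ℤ) + 1 < 0 := by omega
    simpa [P, Q, nonneg, succ_nonneg, PowerSeries.coeff_succ_X_mul]
      using congrArg (PowerSeries.coeff (n + 1)) P_eq

theorem det_jacobiTrudi_completeHomogeneous_empty (x : ι → R) {k : ℕ} {lam : ℕ → ℤ}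
    (hlam : IsPartitionSeq k lam) :
    (jacobiTrudi (completeHomogeneous x ∅) k lam).det = if ∀ i < k, lam i = 0 then 1 else 0 := by
  have lowerTriangular : (jacobiTrudi (completeHomogeneous x ∅) k lam).IsLowerTriangular := by
    intro i j hij
    have : (i : ℕ) < j := hij
    have := hlam.2 i i.2
    exact (completeHomogeneous_empty x _).trans (if_neg (by omega))
  rw [Matrix.det_of_isLowerTriangular _ lowerTriangular]
  simp [jacobiTrudi, completeHomogeneous_empty, Finset.prod_ite_zero, Fin.forall_iff]

end CompleteHomogeneous

section Tableaux

variable {k : ℕ} {lam : ℕ → ℤ} {mu : Fin k → ℤ} {a b : ℕ}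

theorem IsPartitionSeq.le_of_le (hlam : IsPartitionSeq k lam) {i j : ℕ} (hij : i ≤ j)
    (hj : j < k) : lam j ≤ lam i := by
  induction j, hij using Nat.le_induction with
  | base => exact le_rfl
  | succ j _ ih => exact (hlam.1 j hj).trans (ih (by omega))

theorem IsPartitionSeq.le_nextPart (hlam : IsPartitionSeq k lam) {i j : ℕ} (hij : i < j)
    (hj : j < k) : lam j ≤ nextPart k lam i := by
  rw [nextPart, if_pos (by omega)]
  exact hlam.le_of_le hij hj

theorem IsPartitionSeq.nextPart_nonneg (hlam : IsPartitionSeq k lam) (i : ℕ) :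
    0 ≤ nextPart k lam i := by
  unfold nextPart
  split_ifs with hi
  · exact hlam.2 _ hi
  · exact le_rfl

theorem isPartitionSeq_zeroExtend (hlam : IsPartitionSeq k lam) (hmu : mu ∈ interlacing k lam) :
    IsPartitionSeq k (zeroExtend mu) := by
  rw [mem_interlacing] at hmu
  constructor
  · intro i hi
    lift i to Fin k using by omega
    have next_le : zeroExtend mu (i + 1) ≤ lam (i + 1) :=
      (zeroExtend_val mu ⟨i + 1, hi⟩).trans_le (hmu ⟨i + 1, hi⟩).2
    rw [zeroExtend_val]
    exact next_le.trans ((hlam.le_nextPart (Nat.lt_succ_self _) hi).trans (hmu i).1)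
  · intro i hi
    lift i to Fin k using hi
    rw [zeroExtend_val]
    exact (hlam.nextPart_nonneg i).trans (hmu i).1

theorem lt_count_iff_of_downward_closed {p : ℕ → Prop} [DecidablePred p] {n j : ℕ}
    (hp : ∀ i j, i ≤ j → j < n → p j → p i) (hj : j < n) : j < Nat.count p n ↔ p j := by
  constructor
  · contrapose
    intro not_p
    have none_from_j : Nat.count (fun i => p (j + i)) (n - j) = 0 :=
      Nat.count_of_forall_not fun i hi h => not_p (hp j (j + i) (by omega) (by omega) h)
    have := Nat.count_add p j (n - j)
    have := Nat.count_le p (n := j)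
    rw [Nat.add_sub_cancel' hj.le] at *
    omega
  · intro p_j
    have all_to_j : Nat.count p (j + 1) = j + 1 :=
      Nat.count_of_forall fun i hi => hp i j (by omega) hj p_j
    exact Nat.lt_of_succ_le (all_to_j.symm.le.trans (Nat.count_monotone p hj))

namespace SSYT

theorem ext_cells {T U : SSYT k lam a b}
    (h : ∀ i j : ℕ, i < k → (j : ℤ) < lam i → T.entry i j = U.entry i j) : T = U := by
  have entry_eq : T.entry = U.entry := by
    funext i j
    by_cases hij : i < k ∧ (j : ℤ) < lam i
    · exact h i j hij.1 hij.2
    · rw [T.zero_outside i j hij, U.zero_outside i j hij]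
  cases T
  cases U
  congr

instance : Finite (SSYT k lam a b) := by
  let entries (T : SSYT k lam a b) (i : Fin k) (j : Fin (lam i).toNat) : Fin (b + 1) :=
    ⟨T.entry i j, Nat.lt_succ_of_le (T.upper i j i.2 (Int.lt_toNat.1 j.2))⟩
  refine Finite.of_injective entries fun T U h => ext_cells fun i j hi hj => ?_
  exact congrArg Fin.val (congrFun (congrFun h ⟨i, hi⟩) ⟨j, Int.lt_toNat.2 hj⟩)

noncomputable instance : Fintype (SSYT k lam a b) := Fintype.ofFinite _

/-- The shape formed by the cells of `T` with entry at most `m`, as the sequence of the numbers of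
such cells in each row. -/
def shapeLE (T : SSYT k lam a b) (m : ℕ) (i : Fin k) : ℤ :=
  Nat.count (fun j => T.entry i j ≤ m) (lam i).toNat

theorem shapeLE_nonneg (T : SSYT k lam a b) (m : ℕ) (i : Fin k) : 0 ≤ T.shapeLE m i :=
  Int.natCast_nonneg _

theorem shapeLE_le (hlam : IsPartitionSeq k lam) (T : SSYT k lam a b) (m : ℕ) (i : Fin k) :
    T.shapeLE m i ≤ lam i :=
  (Int.le_toNat (hlam.2 i i.2)).1 (Nat.count_le _)

theorem lt_shapeLE_iff (T : SSYT k lam a b) (m : ℕ) (i : Fin k) {j : ℕ} (hj : (j : ℤ) < lam i) :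
    (j : ℤ) < T.shapeLE m i ↔ T.entry i j ≤ m := by
  rw [shapeLE, Nat.cast_lt]
  refine lt_count_iff_of_downward_closed (p := fun j => T.entry i j ≤ m)
    (fun j₁ j₂ hj₁₂ hj₂ h => ?_) (Int.lt_toNat.2 hj)
  exact (T.row_weak i j₁ j₂ i.2 hj₁₂ (Int.lt_toNat.1 hj₂)).trans h

theorem shapeLE_eq (hlam : IsPartitionSeq k lam) (T : SSYT k lam a b) {m : ℕ} {i : Fin k} {l : ℤ}
    (l_nonneg : 0 ≤ l) (l_le : l ≤ lam i)
    (h : ∀ j : ℕ, (j : ℤ) < lam i → (T.entry i j ≤ m ↔ (j : ℤ) < l)) : T.shapeLE m i = l := by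
  have shape_nonneg := T.shapeLE_nonneg m i
  have shape_le := T.shapeLE_le hlam m i
  have lt_iff (j : ℕ) (hj : (j : ℤ) < lam i) : (j : ℤ) < T.shapeLE m i ↔ (j : ℤ) < l :=
    (T.lt_shapeLE_iff m i hj).trans (h j hj)
  lift l to ℕ using l_nonneg
  lift T.shapeLE m i to ℕ using shape_nonneg with t
  have := lt_iff t
  have := lt_iff l
  omega

theorem shapeLE_mem_interlacing (hlam : IsPartitionSeq k lam) (T : SSYT k lam a (b + 1)) :
    T.shapeLE b ∈ interlacing k lam := by
  refine mem_interlacing.2 fun i => ⟨?_, T.shapeLE_le hlam b i⟩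
  unfold nextPart
  split_ifs with hi
  · by_contra! shape_lt
    obtain ⟨j, hj⟩ := Int.eq_ofNat_of_zero_le (T.shapeLE_nonneg b i)
    have j_lt : (j : ℤ) < lam (i + 1) := hj ▸ shape_lt
    have entry_le : T.entry i j ≤ b := by
      have := T.col_strict i (i + 1) j (Nat.lt_succ_self _) hi j_lt
      have := T.upper (i + 1) j hi j_lt
      omega
    have := (T.lt_shapeLE_iff b i (j_lt.trans_le (hlam.1 i hi))).2 entry_le
    omega
  · exact T.shapeLE_nonneg b i

theorem lt_zeroExtend_shapeLE_iff (hlam : IsPartitionSeq k lam) (T : SSYT k lam a b) (m : ℕ)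
    {i : ℕ} (hi : i < k) (j : ℕ) :
    (j : ℤ) < zeroExtend (T.shapeLE m) i ↔ (j : ℤ) < lam i ∧ T.entry i j ≤ m := by
  lift i to Fin k using hi
  rw [zeroExtend_val]
  refine ⟨fun hj => ?_, fun hj => (T.lt_shapeLE_iff m i hj.1).2 hj.2⟩
  have hj' := hj.trans_le (T.shapeLE_le hlam m i)
  exact ⟨hj', (T.lt_shapeLE_iff m i hj').1 hj⟩

/-- The tableau of the entries of `T` that are at most `m`. -/
noncomputable def restrict (hlam : IsPartitionSeq k lam) (T : SSYT k lam a b) (m : ℕ) :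
    SSYT k (zeroExtend (T.shapeLE m)) a m where
  entry i j := if i < k ∧ (j : ℤ) < zeroExtend (T.shapeLE m) i then T.entry i j else 0
  zero_outside _ _ hij := if_neg hij
  lower i j hi hj := by
    rw [if_pos ⟨hi, hj⟩]
    exact T.lower i j hi ((T.lt_zeroExtend_shapeLE_iff hlam m hi j).1 hj).1
  upper i j hi hj := by
    rw [if_pos ⟨hi, hj⟩]
    exact ((T.lt_zeroExtend_shapeLE_iff hlam m hi j).1 hj).2
  row_weak i j₁ j₂ hi hj₁₂ hj₂ := by
    rw [if_pos ⟨hi, by omega⟩, if_pos ⟨hi, hj₂⟩]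
    exact T.row_weak i j₁ j₂ hi hj₁₂ ((T.lt_zeroExtend_shapeLE_iff hlam m hi j₂).1 hj₂).1
  col_strict i₁ i₂ j hi₁₂ hi₂ hj := by
    have hi₁ : i₁ < k := hi₁₂.trans hi₂
    obtain ⟨j_lt, entry_le⟩ := (T.lt_zeroExtend_shapeLE_iff hlam m hi₂ j).1 hj
    have entry_lt := T.col_strict i₁ i₂ j hi₁₂ hi₂ j_lt
    have hj₁ := (T.lt_zeroExtend_shapeLE_iff hlam m hi₁ j).2
      ⟨j_lt.trans_le (hlam.le_of_le hi₁₂.le hi₂), entry_lt.le.trans entry_le⟩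
    rwa [if_pos ⟨hi₁, hj₁⟩, if_pos ⟨hi₂, hj⟩]

/-- The tableau of shape `lam` obtained from a tableau `U` of an interlacing shape `mu` by filling
the cells outside `mu` with `b + 1`. -/
noncomputable def extend (hlam : IsPartitionSeq k lam) (hab : a ≤ b + 1)
    (hmu : mu ∈ interlacing k lam) (U : SSYT k (zeroExtend mu) a b) : SSYT k lam a (b + 1) where
  entry i j := if i < k ∧ (j : ℤ) < lam i then
    if (j : ℤ) < zeroExtend mu i then U.entry i j else b + 1 else 0
  zero_outside _ _ hij := if_neg hij
  lower i j hi hj := by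
    rw [if_pos ⟨hi, hj⟩]
    split_ifs with hj'
    · exact U.lower i j hi hj'
    · exact hab
  upper i j hi hj := by
    rw [if_pos ⟨hi, hj⟩]
    split_ifs with hj'
    · exact (U.upper i j hi hj').trans (Nat.le_succ _)
    · exact le_rfl
  row_weak i j₁ j₂ hi hj₁₂ hj₂ := by
    have cell₁ : i < k ∧ (j₁ : ℤ) < lam i := ⟨hi, by omega⟩
    have cell₂ : i < k ∧ (j₂ : ℤ) < lam i := ⟨hi, hj₂⟩
    rw [if_pos cell₁, if_pos cell₂]
    split_ifs with hj₁' hj₂' hj₂'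
    · exact U.row_weak i j₁ j₂ hi hj₁₂ hj₂'
    · exact (U.upper i j₁ hi hj₁').trans (Nat.le_succ _)
    · omega
    · exact le_rfl
  col_strict i₁ i₂ j hi₁₂ hi₂ hj := by
    have hi₁ : i₁ < k := hi₁₂.trans hi₂
    have nextPart_le : nextPart k lam i₁ ≤ zeroExtend mu i₁ :=
      (mem_interlacing.1 hmu ⟨i₁, hi₁⟩).1.trans_eq (zeroExtend_val mu ⟨i₁, hi₁⟩).symm
    have hj₁ : (j : ℤ) < zeroExtend mu i₁ :=
      hj.trans_le ((hlam.le_nextPart hi₁₂ hi₂).trans nextPart_le)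
    rw [if_pos ⟨hi₁, hj.trans_le (hlam.le_of_le hi₁₂.le hi₂)⟩, if_pos hj₁, if_pos ⟨hi₂, hj⟩]
    split_ifs with hj₂
    · exact U.col_strict i₁ i₂ j hi₁₂ hi₂ hj₂
    · exact Nat.lt_succ_of_le (U.upper i₁ j hi₁ hj₁)

theorem extend_entry_of_lt (hlam : IsPartitionSeq k lam) (hab : a ≤ b + 1)
    (hmu : mu ∈ interlacing k lam) (U : SSYT k (zeroExtend mu) a b) {i : Fin k} {j : ℕ}
    (hj : (j : ℤ) < mu i) : (U.extend hlam hab hmu).entry i j = U.entry i j := by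
  have hj' := hj.trans_le (mem_interlacing.1 hmu i).2
  simp [extend, hj, hj']

theorem extend_entry_of_le (hlam : IsPartitionSeq k lam) (hab : a ≤ b + 1)
    (hmu : mu ∈ interlacing k lam) (U : SSYT k (zeroExtend mu) a b) {i : Fin k} {j : ℕ}
    (hj : mu i ≤ j) (hj' : (j : ℤ) < lam i) : (U.extend hlam hab hmu).entry i j = b + 1 := by
  simp [extend, hj.not_gt, hj']

theorem shapeLE_extend (hlam : IsPartitionSeq k lam) (hab : a ≤ b + 1)
    (hmu : mu ∈ interlacing k lam) (U : SSYT k (zeroExtend mu) a b) :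
    (U.extend hlam hab hmu).shapeLE b = mu := by
  funext i
  obtain ⟨le_mu, mu_le⟩ := mem_interlacing.1 hmu i
  refine shapeLE_eq hlam _ ((hlam.nextPart_nonneg i).trans le_mu) mu_le fun j hj => ?_
  obtain hj' | hj' := lt_or_ge (j : ℤ) (mu i)
  · have entry_le := U.upper i j i.2 (by rwa [zeroExtend_val])
    simp only [extend_entry_of_lt hlam hab hmu U hj', entry_le, hj']
  · simp [extend_entry_of_le hlam hab hmu U hj' hj, hj'.not_gt]

theorem extend_injective (hlam : IsPartitionSeq k lam) (hab : a ≤ b + 1)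
    (hmu : mu ∈ interlacing k lam) :
    Function.Injective fun U : SSYT k (zeroExtend mu) a b => U.extend hlam hab hmu := by
  refine fun U V hUV => ext_cells fun i j hi hj => ?_
  lift i to Fin k using hi
  rw [zeroExtend_val] at hj
  rw [← extend_entry_of_lt hlam hab hmu U hj, ← extend_entry_of_lt hlam hab hmu V hj]
  exact congrArg (fun T => T.entry i j) hUV

theorem extend_restrict (hlam : IsPartitionSeq k lam) (hab : a ≤ b + 1)
    (T : SSYT k lam a (b + 1)) :
    (T.restrict hlam b).extend hlam hab (T.shapeLE_mem_interlacing hlam) = T := by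
  refine ext_cells fun i j hi hj => ?_
  lift i to Fin k using hi
  obtain hj' | hj' := lt_or_ge (j : ℤ) (T.shapeLE b i)
  · rw [extend_entry_of_lt _ _ _ _ hj']
    simp [restrict, hj']
  · rw [extend_entry_of_le _ _ _ _ hj' hj]
    have entry_gt := (T.lt_shapeLE_iff b i hj).not.1 hj'.not_gt
    have entry_le := T.upper i j i.2 hj
    omega

theorem weight_extend (hlam : IsPartitionSeq k lam) (hab : a ≤ b + 1)
    (hmu : mu ∈ interlacing k lam) (U : SSYT k (zeroExtend mu) a b) :
    (U.extend hlam hab hmu).weight =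
      (∏ i : Fin k, MvPolynomial.X (b + 1) ^ (lam i - mu i).toNat) * U.weight := by
  rw [weight, weight, Finset.prod_range, Finset.prod_range, ← Finset.prod_mul_distrib]
  refine Finset.prod_congr rfl fun i _ => ?_
  obtain ⟨le_mu, mu_le⟩ := mem_interlacing.1 hmu i
  have mu_nonneg : 0 ≤ mu i := (hlam.nextPart_nonneg i).trans le_mu
  have old_cells : ∏ j ∈ Finset.range (mu i).toNat,
      (MvPolynomial.X ((U.extend hlam hab hmu).entry i j) : MvPolynomial ℕ ℤ) =
        ∏ j ∈ Finset.range (mu i).toNat, MvPolynomial.X (U.entry i j) :=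
    Finset.prod_congr rfl fun j hj => by
      rw [extend_entry_of_lt hlam hab hmu U (Int.lt_toNat.1 (Finset.mem_range.1 hj))]
  have new_cells : ∏ j ∈ Finset.Ico (mu i).toNat (lam i).toNat,
      (MvPolynomial.X ((U.extend hlam hab hmu).entry i j) : MvPolynomial ℕ ℤ) =
        MvPolynomial.X (b + 1) ^ (lam i - mu i).toNat := by
    rw [Int.toNat_sub'' (mu_nonneg.trans mu_le) mu_nonneg, ← Nat.card_Ico]
    refine Finset.prod_eq_pow_card fun j hj => ?_
    rw [Finset.mem_Ico, Int.toNat_le, Int.lt_toNat] at hj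
    rw [extend_entry_of_le hlam hab hmu U hj.1 hj.2]
  rw [zeroExtend_val, ← Finset.prod_range_mul_prod_Ico _ (Int.toNat_le_toNat mu_le), old_cells,
    new_cells, mul_comm]

end SSYT

theorem schur_eq_sum_weight (hlam : IsPartitionSeq k lam) (a b : ℕ) :
    schur k lam a b = ∑ T : SSYT k lam a b, T.weight := by
  rw [schur, if_pos hlam, finsum_eq_sum_of_fintype]

theorem schur_branching (hlam : IsPartitionSeq k lam) (hab : a ≤ b + 1) :
    schur k lam a (b + 1) = ∑ mu ∈ interlacing k lam,
      (∏ i : Fin k, MvPolynomial.X (b + 1) ^ (lam i - mu i).toNat) *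
        schur k (zeroExtend mu) a b := by
  classical
  rw [schur_eq_sum_weight hlam, ← Finset.sum_fiberwise_of_maps_to (g := fun T => T.shapeLE b)
    fun T _ => T.shapeLE_mem_interlacing hlam]
  refine Finset.sum_congr rfl fun mu hmu => ?_
  rw [schur_eq_sum_weight (isPartitionSeq_zeroExtend hlam hmu), Finset.mul_sum]
  symm
  refine Finset.sum_bij (fun U _ => U.extend hlam hab hmu) ?_ ?_ ?_ ?_
  · exact fun U _ => Finset.mem_filter.2 ⟨Finset.mem_univ _, U.shapeLE_extend hlam hab hmu⟩
  · exact fun U _ V _ hUV => SSYT.extend_injective hlam hab hmu hUV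
  · intro T hT
    obtain rfl := (Finset.mem_filter.1 hT).2
    exact ⟨T.restrict hlam b, Finset.mem_univ _, T.extend_restrict hlam hab⟩
  · exact fun U _ => (U.weight_extend hlam hab hmu).symm

theorem schur_of_lt (hlam : IsPartitionSeq k lam) (hba : b < a) :
    schur k lam a b = if ∀ i < k, lam i = 0 then 1 else 0 := by
  rw [schur_eq_sum_weight hlam]
  split_ifs with lam_eq_zero
  · have no_cells {i j : ℕ} (hi : i < k) : ¬ (j : ℤ) < lam i := by
      rw [lam_eq_zero i hi]
      omega
    let T₀ : SSYT k lam a b :=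
      { entry := fun _ _ => 0
        zero_outside := fun _ _ _ => rfl
        lower := fun _ _ hi hj => absurd hj (no_cells hi)
        upper := fun _ _ hi hj => absurd hj (no_cells hi)
        row_weak := fun _ _ _ hi _ hj => absurd hj (no_cells hi)
        col_strict := fun _ _ _ _ hi hj => absurd hj (no_cells hi) }
    have eq_T₀ (T : SSYT k lam a b) : T = T₀ :=
      SSYT.ext_cells fun _ _ hi hj => absurd hj (no_cells hi)
    rw [Fintype.sum_eq_single T₀ fun T hT => absurd (eq_T₀ T) hT]
    refine Finset.prod_eq_one fun i hi => ?_
    simp [lam_eq_zero i (Finset.mem_range.1 hi)]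
  · push Not at lam_eq_zero
    obtain ⟨i, hi, lam_ne_zero⟩ := lam_eq_zero
    have cell : ((0 : ℕ) : ℤ) < lam i := lt_of_le_of_ne (hlam.2 i hi) lam_ne_zero.symm
    refine Finset.sum_eq_zero fun T _ => absurd ?_ hba.not_ge
    exact (T.lower i 0 hi cell).trans (T.upper i 0 hi cell)

theorem schur_eq_det_jacobiTrudi (ha : 1 ≤ a) (hlam : IsPartitionSeq k lam) :
    schur k lam a b =
      (jacobiTrudi (completeHomogeneous MvPolynomial.X (Finset.Icc a b)) k lam).det := by
  have of_lt {b : ℕ} {lam : ℕ → ℤ} (hlam : IsPartitionSeq k lam) (hba : b < a) : schur k lam a b =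
      (jacobiTrudi (completeHomogeneous MvPolynomial.X (Finset.Icc a b)) k lam).det := by
    rw [schur_of_lt hlam hba, Finset.Icc_eq_empty hba.not_ge,
      det_jacobiTrudi_completeHomogeneous_empty _ hlam]
  induction b generalizing lam with
  | zero => exact of_lt hlam ha
  | succ b ih =>
    obtain hba | hab := lt_or_ge (b + 1) a
    · exact of_lt hlam hba
    · have recurrence (m : ℤ) := completeHomogeneous_insert
        (MvPolynomial.X : ℕ → MvPolynomial ℕ ℤ) (s := Finset.Icc a b) (i := b + 1) (by simp) m
      rw [Finset.insert_Icc_right_eq_Icc_add_one hab] at recurrence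
      rw [schur_branching hlam hab, det_jacobiTrudi_branching recurrence
        (fun m => completeHomogeneous_of_neg _ _) hlam]
      exact Finset.sum_congr rfl fun mu hmu => by rw [ih (isPartitionSeq_zeroExtend hlam hmu)]

end Tableaux

theorem stmt_13_general {r a b : ℕ} {lam : ℕ → ℤ} (hlam : IsPartitionSeq (r + 1) lam)
    (hpos : 1 ≤ lam r) (ha : 1 ≤ a) (hab : a ≤ b) :
    schur (r + 1) lam a b * schur r lam (a + 1) b =
      schur r lam a b * schur (r + 1) lam (a + 1) b +
        MvPolynomial.X a * schur (r + 1) (fun i => lam i - 1) a b *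
          schur r (fun i => lam i + 1) (a + 1) b := by
  have hlam_init : IsPartitionSeq r lam :=
    ⟨fun i hi => hlam.1 i (by omega), fun i hi => hlam.2 i (by omega)⟩
  have hlam_pred : IsPartitionSeq (r + 1) fun i => lam i - 1 :=
    ⟨fun i hi => sub_le_sub_right (hlam.1 i hi) 1,
      fun i hi => sub_nonneg.2 (hpos.trans (hlam.le_of_le (Nat.le_of_lt_succ hi) r.lt_succ_self))⟩
  have hlam_succ : IsPartitionSeq r fun i => lam i + 1 :=
    ⟨fun i hi => add_le_add_left (hlam_init.1 i hi) 1,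
      fun i hi => add_nonneg (hlam_init.2 i hi) zero_le_one⟩
  have recurrence (m : ℤ) := completeHomogeneous_insert
    (MvPolynomial.X : ℕ → MvPolynomial ℕ ℤ) (s := Finset.Icc (a + 1) b) (i := a) (by simp) m
  rw [Finset.insert_Icc_add_one_left_eq_Icc hab] at recurrence
  have ha' : 1 ≤ a + 1 := Nat.le_add_left 1 a
  rw [schur_eq_det_jacobiTrudi ha hlam, schur_eq_det_jacobiTrudi ha hlam_init,
    schur_eq_det_jacobiTrudi ha hlam_pred, schur_eq_det_jacobiTrudi ha' hlam,
    schur_eq_det_jacobiTrudi ha' hlam_init, schur_eq_det_jacobiTrudi ha' hlam_succ]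
  exact det_jacobiTrudi_mul_det_jacobiTrudi recurrence r lam

/-- for `c, r ≥ 1` and `n ≥ r`:
`s^{[n]}_{c^r} · s^{[2,n]}_{c^{r-1}} = s^{[n]}_{c^{r-1}} · s^{[2,n]}_{c^r}
 + x_1 · s^{[n]}_{(c-1)^r} · s^{[2,n]}_{(c+1)^{r-1}}`. -/
theorem stmt_13 (c r n : ℕ) (hc : 1 ≤ c) (hr : 1 ≤ r) (hn : r ≤ n) :
    schur r (fun _ => (c : ℤ)) 1 n * schur (r - 1) (fun _ => (c : ℤ)) 2 n =
      schur (r - 1) (fun _ => (c : ℤ)) 1 n * schur r (fun _ => (c : ℤ)) 2 n +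
        MvPolynomial.X 1 * schur r (fun _ => (c : ℤ) - 1) 1 n *
          schur (r - 1) (fun _ => (c : ℤ) + 1) 2 n := by
  obtain ⟨s, rfl⟩ := Nat.exists_eq_add_of_le' hr
  exact stmt_13_general ⟨fun _ _ => le_rfl, fun _ _ => Int.natCast_nonneg c⟩
    (Nat.one_le_cast.2 hc) le_rfl (hr.trans hn)
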